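/- Let f ∈ elh(ℂ) be fixed. If {g_n} is a sequence in elh(ℂ) such that the compositions g_n ∘ f converge locally uniformly on ℂ to a function g, then there exists h ∈ elh(ℂ) with g = h ∘ f; that is, the image R_f(elh(ℂ)) = { g ∘ f : g ∈ elh(ℂ) } is a closed subset of elh(ℂ) in the topology of uniform convergence on compact subsets. (Proposition 3.16, part 2.) -/

import Mathlib

open Filter Topology

/-- `elh ℂ`: entire functions with nonvanishing derivative, normalized so `f'(0) = 1`. -/
def elh (f : ℂ → ℂ) : Prop :=
  Differentiable ℂ f ∧ (∀ z : ℂ, deriv f z ≠ 0) ∧ deriv f 0 = 1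

open Complex Set Bornology

/-! An entire function `f` may omit values, so locally uniform convergence of `Gₙ ∘ f` only controls
`Gₙ` on compact subsets of `range f`. The set of omitted values is, however, totally disconnected.
Indeed, let `a ≠ b` lie in a connected set of omitted values and let `M` be an entire logarithm of
`(f - a) / (f - b)`. If `f z = f w`, the loop `f ∘ [w, z]` has the same winding number about `a`
and `b`, so `M z = M w`. Hence `M z = M w + 2πi` never holds, because it would force `f z = f w`;
but the range of a nonconstant entire function is open and dense, so it meets all its translates.

Every point therefore has a small neighbourhood whose frontier lies in `range f`, and the maximum
principle transfers uniform convergence from the frontier to the interior. This makes `Gₙ` converge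
locally uniformly on the whole plane, and Hurwitz's theorem keeps the derivative of the limit
free of zeros. -/

section Topology

variable {X Y ι α β : Type*}

lemma exists_isCompact_subset_image [TopologicalSpace X] [WeaklyLocallyCompactSpace X]
    [TopologicalSpace Y] {f : X → Y} (hf : IsOpenMap f) {F : Set Y} (hF : IsCompact F)
    (hFf : F ⊆ range f) : ∃ K, IsCompact K ∧ F ⊆ f '' K := by
  have hlocal : ∀ y ∈ F, ∃ t ∈ 𝓝[F] y, ∃ K, IsCompact K ∧ t ⊆ f '' K := by
    intro y hy
    obtain ⟨x, rfl⟩ := hFf hy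
    obtain ⟨K, hK, hxK⟩ := exists_compact_mem_nhds x
    exact ⟨f '' K, mem_nhdsWithin_of_mem_nhds (hf.image_mem_nhds hxK), K, hK, Subset.rfl⟩
  refine hF.induction_on ⟨∅, isCompact_empty, empty_subset _⟩ ?_ ?_ hlocal
  · rintro s t hst ⟨K, hK, htK⟩
    exact ⟨K, hK, hst.trans htK⟩
  · rintro s t ⟨K, hK, hsK⟩ ⟨L, hL, htL⟩
    exact ⟨K ∪ L, hK.union hL, image_union f K L ▸ union_subset_union hsK htL⟩

lemma exists_isOpen_mem_disjoint_frontier [TopologicalSpace X] [T2Space X] [LocallyCompactSpace X]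
    {E : Set X} (hE : IsClosed E) (htd : IsTotallyDisconnected E) (a : X) :
    ∃ V, IsOpen V ∧ a ∈ V ∧ IsCompact (closure V) ∧ Disjoint (frontier V) E := by
  have := hE.locallyCompactSpace
  have := totallyDisconnectedSpace_subtype_iff.2 htd
  obtain ⟨N, hN, haN⟩ := exists_compact_mem_nhds a
  obtain ⟨W, hW, hWN, haW⟩ : ∃ W : Set E, IsClopen W ∧ (↑) '' W ⊆ N ∧ a ∉ ((↑) '' Wᶜ : Set X) := by
    by_cases ha : a ∈ E
    · obtain ⟨W, hW, haW, hWN⟩ :=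
        (loc_compact_Haus_tot_disc_of_zero_dim (H := E)).mem_nhds_iff.1
          (continuous_subtype_val.continuousAt.preimage_mem_nhds (x := (⟨a, ha⟩ : E)) haN)
      exact ⟨W, hW, image_subset_iff.2 hWN, by simpa [ha] using haW⟩
    · exact ⟨∅, isClopen_empty, by simp, by simp [ha]⟩
  have hWc : IsCompact ((↑) '' W : Set X) :=
    hN.of_isClosed_subset (hE.isClosedMap_subtype_val _ hW.isClosed) hWN
  have hWc' : IsClosed ((↑) '' Wᶜ : Set X) := hE.isClosedMap_subtype_val _ hW.compl.isClosed
  obtain ⟨V, hV, hWV, hVW, hVc⟩ :=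
    exists_open_between_and_isCompact_closure (hWc.insert a) hWc'.isOpen_compl
      (insert_subset haW ((disjoint_image_iff Subtype.val_injective).2
        disjoint_compl_right).subset_compl_right)
  refine ⟨V, hV, hWV (mem_insert a _), hVc, disjoint_left.2 fun x hxV hxE => ?_⟩
  rw [hV.frontier_eq] at hxV
  by_cases hxW : (⟨x, hxE⟩ : E) ∈ W
  · exact hxV.2 (hWV (mem_insert_of_mem a ⟨_, hxW, rfl⟩))
  · exact hVW hxV.1 ⟨_, hxW, rfl⟩

lemma exists_tendstoLocallyUniformly_of_uniformCauchySeqOn_nhds [TopologicalSpace α]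
    [UniformSpace β] [CompleteSpace β] {p : Filter ι} [p.NeBot] {F : ι → α → β}
    (hF : ∀ x, ∃ V ∈ 𝓝 x, UniformCauchySeqOn F p V) :
    ∃ f, TendstoLocallyUniformly F f p := by
  have hlim : ∀ x, ∃ y, Tendsto (fun n => F n x) p (𝓝 y) := fun x =>
    let ⟨_, hV, hFV⟩ := hF x
    cauchy_map_iff_exists_tendsto.1 (hFV.cauchy_map (mem_of_mem_nhds hV))
  choose f hf using hlim
  refine ⟨f, fun u hu x => ?_⟩
  obtain ⟨V, hV, hFV⟩ := hF x
  exact ⟨V, hV, hFV.tendstoUniformlyOn_of_tendsto (fun y _ => hf y) u hu⟩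

end Topology

section MaximumPrinciple

variable {ι E F : Type*} [NormedAddCommGroup E] [NormedSpace ℂ E] [Nontrivial E]
  [NormedAddCommGroup F] [NormedSpace ℂ F] {p : Filter ι}

lemma uniformCauchySeqOn_closure_of_frontier {G : ι → E → F} {V : Set E} (hV : IsBounded V)
    (hd : ∀ n, DiffContOnCl ℂ (G n) V) (hG : UniformCauchySeqOn G p (frontier V)) :
    UniformCauchySeqOn G p (closure V) := by
  intro u hu
  obtain ⟨ε, hε, hεu⟩ := Metric.mem_uniformity_dist.1 hu
  filter_upwards [hG _ (Metric.dist_mem_uniformity (half_pos hε))] with n hn x hx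
  have hle : ‖(G n.1 - G n.2) x‖ ≤ ε / 2 :=
    norm_le_of_forall_mem_frontier_norm_le hV ((hd n.1).sub (hd n.2))
      (fun z hz => (dist_eq_norm (G n.1 z) (G n.2 z)).symm.trans_le (hn z hz).le) hx
  exact hεu <| (dist_eq_norm _ _).trans_lt (hle.trans_lt (half_lt_self hε))

lemma exists_tendstoLocallyUniformly_of_uniformCauchySeqOn_compl [ProperSpace E] [CompleteSpace F]
    [p.NeBot] {S : Set E} (hS : IsClosed S) (htd : IsTotallyDisconnected S) {G : ι → E → F}
    (hd : ∀ n, Differentiable ℂ (G n))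
    (hG : ∀ K ⊆ Sᶜ, IsCompact K → UniformCauchySeqOn G p K) :
    ∃ h, TendstoLocallyUniformly G h p := by
  refine exists_tendstoLocallyUniformly_of_uniformCauchySeqOn_nhds fun a => ?_
  obtain ⟨V, hV, haV, hVc, hVS⟩ := exists_isOpen_mem_disjoint_frontier hS htd a
  have hfr : UniformCauchySeqOn G p (frontier V) :=
    hG _ hVS.subset_compl_right (hVc.of_isClosed_subset isClosed_frontier frontier_subset_closure)
  exact ⟨closure V, mem_of_superset (hV.mem_nhds haV) subset_closure,
    uniformCauchySeqOn_closure_of_frontier (hVc.isBounded.subset subset_closure)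
      (fun n => (hd n).diffContOnCl) hfr⟩

lemma le_norm_of_forall_mem_frontier_le_norm {f : E → ℂ} {V : Set E} (hV : IsBounded V)
    (hd : DiffContOnCl ℂ f V) (hf : ∀ z ∈ closure V, f z ≠ 0) {c : ℝ}
    (hc : ∀ z ∈ frontier V, c ≤ ‖f z‖) {z : E} (hz : z ∈ closure V) : c ≤ ‖f z‖ := by
  obtain hc₀ | hc₀ := le_or_gt c 0
  · exact hc₀.trans (norm_nonneg _)
  have hinv : ‖f⁻¹ z‖ ≤ c⁻¹ :=
    norm_le_of_forall_mem_frontier_norm_le hV (hd.inv hf)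
      (fun w hw => (norm_inv (f w)).trans_le (inv_anti₀ hc₀ (hc w hw))) hz
  rw [Pi.inv_apply, norm_inv] at hinv
  exact (inv_le_inv₀ (norm_pos_iff.2 (hf z hz)) hc₀).1 hinv

end MaximumPrinciple

section Hurwitz

variable {ι : Type*} {p : Filter ι} [p.NeBot] {U : Set ℂ} {F : ι → ℂ → ℂ} {f : ℂ → ℂ}

lemma ne_zero_of_tendstoLocallyUniformlyOn_of_eventually_ne_zero (hU : IsOpen U)
    (hF : ∀ n, DifferentiableOn ℂ (F n) U) (hF₀ : ∀ n, ∀ z ∈ U, F n z ≠ 0)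
    (hFf : TendstoLocallyUniformlyOn F f p U) {w : ℂ} (hw : w ∈ U)
    (hf : ∀ᶠ z in 𝓝[≠] w, f z ≠ 0) : f w ≠ 0 := by
  intro hfw
  obtain ⟨r, hr, hrU⟩ := Metric.nhds_basis_closedBall.mem_iff.1
    (inter_mem (hU.mem_nhds hw) (eventually_nhdsWithin_iff.1 hf))
  have hball : Metric.closedBall w r ⊆ U := fun z hz => (hrU hz).1
  have hcont : ContinuousOn f (Metric.sphere w r) :=
    (hFf.continuousOn (Eventually.of_forall fun n => (hF n).continuousOn).frequently).mono
      (Metric.sphere_subset_closedBall.trans hball)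
  obtain ⟨x, hx, hmin⟩ := (isCompact_sphere w r).exists_isMinOn
    (NormedSpace.sphere_nonempty.2 hr.le) hcont.norm
  have hm : 0 < ‖f x‖ := norm_pos_iff.2 <|
    (hrU (Metric.sphere_subset_closedBall hx)).2 (Metric.ne_of_mem_sphere hx hr.ne')
  have hunif := (tendstoLocallyUniformlyOn_iff_forall_isCompact hU).1 hFf _ hball
    (isCompact_closedBall w r)
  obtain ⟨n, hn⟩ := (Metric.tendstoUniformlyOn_iff.1 hunif _ (half_pos hm)).exists
  have hsphere : ∀ z ∈ frontier (Metric.ball w r), ‖f x‖ / 2 ≤ ‖F n z‖ := by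
    intro z hz
    rw [frontier_ball w hr.ne'] at hz
    have hzx : ‖f x‖ ≤ ‖f z‖ := hmin hz
    have hdist := hn z (Metric.sphere_subset_closedBall hz)
    rw [dist_eq_norm] at hdist
    linarith [norm_sub_norm_le (f z) (F n z)]
  have hcenter : ‖f x‖ / 2 ≤ ‖F n w‖ :=
    le_norm_of_forall_mem_frontier_le_norm Metric.isBounded_ball
      ((hF n).diffContOnCl_ball hball)
      (fun z hz => hF₀ n z (hball (Metric.closure_ball_subset_closedBall hz))) hsphere
      (subset_closure (Metric.mem_ball_self hr))
  have hdist := hn w (Metric.mem_closedBall_self hr.le)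
  rw [hfw, dist_zero_left] at hdist
  exact hcenter.not_gt hdist

lemma ne_zero_of_tendstoLocallyUniformlyOn (hU : IsOpen U) (hUc : IsPreconnected U)
    (hF : ∀ n, DifferentiableOn ℂ (F n) U) (hF₀ : ∀ n, ∀ z ∈ U, F n z ≠ 0)
    (hFf : TendstoLocallyUniformlyOn F f p U) (hf : ∃ z ∈ U, f z ≠ 0) :
    ∀ z ∈ U, f z ≠ 0 := by
  intro w hw
  have han : AnalyticOnNhd ℂ f U :=
    (hFf.differentiableOn (Eventually.of_forall hF) hU).analyticOnNhd hU
  refine ne_zero_of_tendstoLocallyUniformlyOn_of_eventually_ne_zero hU hF hF₀ hFf hw ?_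
  by_contra hfreq
  obtain ⟨z, hz, hfz⟩ := hf
  exact hfz <| han.eqOn_zero_of_preconnected_of_frequently_eq_zero hUc hw
    ((not_eventually.1 hfreq).mono fun _ => not_ne_iff.1) hz

end Hurwitz

section RangeOfEntire

lemma denseRange_of_differentiable {E : Type*} [NormedAddCommGroup E] [NormedSpace ℂ E]
    {f : E → ℂ} (hf : Differentiable ℂ f) (hne : ∃ z w, f z ≠ f w) : DenseRange f := by
  by_contra hdense
  obtain ⟨c, hc⟩ := not_forall.1 hdense
  obtain ⟨r, hr, hrf⟩ :=
    Metric.nhds_basis_ball.mem_iff.1 (isClosed_closure.isOpen_compl.mem_nhds hc)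
  have hlow : ∀ z, r ≤ ‖f z - c‖ := fun z =>
    not_lt.1 fun hz => hrf (mem_ball_iff_norm.2 hz) (subset_closure (mem_range_self z))
  have hbdd : IsBounded (range fun z => (f z - c)⁻¹) := by
    refine isBounded_iff_forall_norm_le.2 ⟨r⁻¹, forall_mem_range.2 fun z => ?_⟩
    simpa only [norm_inv] using inv_anti₀ hr (hlow z)
  have hdiff : Differentiable ℂ fun z => (f z - c)⁻¹ :=
    (hf.sub_const c).inv fun z => norm_pos_iff.1 (hr.trans_le (hlow z))
  obtain ⟨z, w, hzw⟩ := hne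
  exact hzw <| sub_left_injective <| inv_injective <| hdiff.apply_eq_apply_of_bounded hbdd z w

variable {f : ℂ → ℂ}

lemma isOpenMap_of_differentiable (hf : Differentiable ℂ f) (hne : ∃ z w, f z ≠ f w) :
    IsOpenMap f := by
  have han : AnalyticOnNhd ℂ f univ := fun z _ => hf.analyticAt z
  obtain ⟨z, w, hzw⟩ := hne
  exact han.is_constant_or_isOpenMap.resolve_left fun ⟨c, hc⟩ => hzw ((hc z).trans (hc w).symm)

lemma exists_apply_eq_apply_add (hf : Differentiable ℂ f) (hne : ∃ z w, f z ≠ f w) (c : ℂ) :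
    ∃ z w, f z = f w + c := by
  have hopen : IsOpen ((· + c) '' range f) :=
    (Homeomorph.addRight c).isOpenMap _ (isOpenMap_of_differentiable hf hne).isOpen_range
  obtain ⟨z, _, ⟨w, rfl⟩, hzw⟩ :=
    (denseRange_of_differentiable hf hne).exists_mem_open hopen ((range_nonempty f).image _)
  exact ⟨z, w, hzw.symm⟩

lemma exists_differentiable_exp_eq (hf : Differentiable ℂ f) (hf₀ : ∀ z, f z ≠ 0) :
    ∃ L : ℂ → ℂ, Differentiable ℂ L ∧ ∀ z, exp (L z) = f z := by
  have hlog : Differentiable ℂ (logDeriv f) := hf.deriv.div hf hf₀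
  obtain ⟨L, hL⟩ := hlog.isExactOn_univ
  replace hL z : HasDerivAt L (logDeriv f z) z := hL z (mem_univ z)
  have hderiv : ∀ z, HasDerivAt (fun z => f z * exp (-L z)) 0 z := fun z => by
    refine ((hf z).hasDerivAt.mul (hL z).neg.cexp).congr_deriv ?_
    have := hf₀ z
    simp only [Pi.neg_apply, logDeriv_apply]
    field_simp
    ring
  have heq : ∀ z, f z * exp (-L z) = f 0 * exp (-L 0) := fun z =>
    is_const_of_deriv_eq_zero (fun z => (hderiv z).differentiableAt) (fun z => (hderiv z).deriv) z 0
  refine ⟨fun z => L z + log (f 0 * exp (-L 0)),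
    fun z => ((hL z).add_const _).differentiableAt, fun z => ?_⟩
  rw [exp_add, exp_log (mul_ne_zero (hf₀ 0) (exp_ne_zero _)), ← heq z, exp_neg]
  field_simp [exp_ne_zero]

lemma sub_eq_mul_integral_logDeriv {L : ℂ → ℂ} (hL : Differentiable ℂ L) (z w : ℂ) :
    L z - L w = (z - w) * ∫ t in (0 : ℝ)..1, logDeriv (fun x => exp (L x)) (w + t * (z - w)) := by
  have hlog : logDeriv (fun x => exp (L x)) = deriv L := by
    ext x
    simpa [Function.comp_def] using logDeriv_comp (f := exp) differentiableAt_exp (hL x)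
  have hcont : Continuous (deriv L) := hL.deriv.continuous
  have hFTC := intervalIntegral.integral_unitInterval_deriv_eq_sub (f := L) (f' := deriv L)
    (z₀ := w) (z₁ := z - w) (by fun_prop) (fun t _ => (hL _).hasDerivAt)
  simpa [hlog] using hFTC.symm

lemma continuousOn_integral_logDeriv_sub (hf : Differentiable ℂ f) (z w : ℂ) :
    ContinuousOn (fun c => ∫ t in (0 : ℝ)..1, logDeriv (fun x => f x - c) (w + t * (z - w)))
      (range f)ᶜ := by
  rw [continuousOn_iff_continuous_domRestrict]
  refine intervalIntegral.continuous_parametric_intervalIntegral_of_continuous' ?_ 0 1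
  have hf' := hf.deriv.continuous
  have hf := hf.continuous
  simp only [logDeriv_apply, deriv_sub_const]
  refine Continuous.div (by fun_prop) (by fun_prop) fun x => ?_
  exact sub_ne_zero.2 fun hx => x.1.2 ⟨_, hx⟩

/-- Both sides are `2πi` times the winding number of the closed curve `f ∘ [w, z]`, about `a` and
about `b` respectively. -/
lemma log_sub_log_eq_of_isPreconnected (hf : Differentiable ℂ f) {T : Set ℂ}
    (hT : IsPreconnected T) (hTf : T ⊆ (range f)ᶜ) {a b : ℂ} (ha : a ∈ T) (hb : b ∈ T)
    {A B : ℂ → ℂ} (hA : Differentiable ℂ A) (hB : Differentiable ℂ B)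
    (hAf : ∀ z, exp (A z) = f z - a) (hBf : ∀ z, exp (B z) = f z - b)
    {z w : ℂ} (hzw : f z = f w) : A z - A w = B z - B w := by
  let inc : ℂ → ℂ := fun c =>
    (z - w) * ∫ t in (0 : ℝ)..1, logDeriv (fun x => f x - c) (w + t * (z - w))
  have hinc {c : ℂ} {L : ℂ → ℂ} (hL : Differentiable ℂ L) (hLf : ∀ x, exp (L x) = f x - c) :
      L z - L w = inc c := by
    simpa only [hLf] using sub_eq_mul_integral_logDeriv hL z w
  have hincT : MapsTo inc T (range fun n : ℤ => n * (2 * Real.pi * I)) := by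
    intro c hc
    obtain ⟨L, hL, hLf⟩ := exists_differentiable_exp_eq (hf.sub_const c)
      fun x hx => hTf hc ⟨x, sub_eq_zero.1 hx⟩
    have hexp : exp (inc c) = 1 := by
      rw [← hinc hL hLf, exp_sub, div_eq_one_iff_eq (exp_ne_zero _), hLf, hLf, hzw]
    obtain ⟨n, hn⟩ := exp_eq_one_iff.1 hexp
    exact ⟨n, hn.symm⟩
  have hcont : ContinuousOn inc T :=
    continuousOn_const.mul ((continuousOn_integral_logDeriv_sub hf z w).mono hTf)
  have hsub : (inc '' T).Subsingleton :=
    (countable_range _).isTotallyDisconnected _ hincT.image_subset (hT.image inc hcont)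
  rw [hinc hA hAf, hinc hB hBf]
  exact hsub (mem_image_of_mem inc ha) (mem_image_of_mem inc hb)

lemma eq_of_sub_div_sub_eq {K : Type*} [Field K] {a b x y : K} (hab : a ≠ b) (hx : x ≠ b)
    (hy : y ≠ b) (h : (x - a) / (x - b) = (y - a) / (y - b)) : x = y := by
  rw [div_eq_div_iff (sub_ne_zero.2 hx) (sub_ne_zero.2 hy)] at h
  have hmul : (a - b) * (x - y) = 0 := by linear_combination h
  exact sub_eq_zero.1 ((mul_eq_zero.1 hmul).resolve_left (sub_ne_zero.2 hab))

lemma isTotallyDisconnected_compl_range (hf : Differentiable ℂ f) (hne : ∃ z w, f z ≠ f w) :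
    IsTotallyDisconnected (range f)ᶜ := by
  intro T hTf hT a ha b hb
  by_contra hab
  have hlog : ∀ c ∈ T, ∃ L : ℂ → ℂ, Differentiable ℂ L ∧ ∀ z, exp (L z) = f z - c := fun c hc =>
    exists_differentiable_exp_eq (hf.sub_const c) fun z hz => hTf hc ⟨z, sub_eq_zero.1 hz⟩
  obtain ⟨A, hA, hAf⟩ := hlog a ha
  obtain ⟨B, hB, hBf⟩ := hlog b hb
  have hinj {z w : ℂ} (h : exp (A z - B z) = exp (A w - B w)) : f z = f w := by
    simp only [exp_sub, hAf, hBf] at h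
    exact eq_of_sub_div_sub_eq hab (fun hz => hTf hb ⟨z, hz⟩) (fun hw => hTf hb ⟨w, hw⟩) h
  obtain ⟨x, y, hxy⟩ := hne
  obtain ⟨z, w, hzw⟩ := exists_apply_eq_apply_add (hA.sub hB)
    ⟨x, y, fun h => hxy (hinj (congrArg exp h))⟩ (2 * Real.pi * I)
  simp only [Pi.sub_apply] at hzw
  have hfzw : f z = f w := hinj (by rw [hzw, exp_add, exp_two_pi_mul_I, mul_one])
  have hAB := log_sub_log_eq_of_isPreconnected hf hT hTf ha hb hA hB hAf hBf hfzw
  exact two_pi_I_ne_zero (by linear_combination hAB - hzw)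

end RangeOfEntire

section Composition

variable {ι : Type*} {p : Filter ι} [p.NeBot] {f g : ℂ → ℂ} {G : ι → ℂ → ℂ}

lemma exists_tendstoLocallyUniformly_of_comp (hf : Differentiable ℂ f) (hne : ∃ z w, f z ≠ f w)
    (hG : ∀ n, Differentiable ℂ (G n))
    (hcauchy : ∀ K, IsCompact K → UniformCauchySeqOn (fun n => G n ∘ f) p K) :
    ∃ h, TendstoLocallyUniformly G h p := by
  have hopen := isOpenMap_of_differentiable hf hne
  refine exists_tendstoLocallyUniformly_of_uniformCauchySeqOn_compl
    hopen.isOpen_range.isClosed_compl (isTotallyDisconnected_compl_range hf hne) hG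
    fun F hFf hF => ?_
  obtain ⟨K, hK, hFK⟩ := exists_isCompact_subset_image hopen hF (by rwa [compl_compl] at hFf)
  have himage : UniformCauchySeqOn G p (f '' K) := fun u hu =>
    (hcauchy K hK u hu).mono fun _ hn => forall_mem_image.2 hn
  exact himage.mono hFK

lemma elh_of_tendstoLocallyUniformly {h : ℂ → ℂ} (hG : ∀ n, elh (G n))
    (hGh : TendstoLocallyUniformly G h p) : elh h := by
  rw [← tendstoLocallyUniformlyOn_univ] at hGh
  have hGd : ∀ᶠ n in p, DifferentiableOn ℂ (G n) univ :=
    Eventually.of_forall fun n => (hG n).1.differentiableOn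
  have hderiv : TendstoLocallyUniformlyOn (deriv ∘ G) (deriv h) p univ := hGh.deriv hGd isOpen_univ
  have hderiv₀ : deriv h 0 = 1 :=
    tendsto_nhds_unique (hderiv.tendsto_at (mem_univ 0))
      (tendsto_const_nhds.congr fun n => (hG n).2.2.symm)
  have hne : ∀ z ∈ univ, deriv h z ≠ 0 :=
    ne_zero_of_tendstoLocallyUniformlyOn isOpen_univ isPreconnected_univ
      (fun n => (hG n).1.deriv.differentiableOn) (fun n z _ => (hG n).2.1 z) hderiv
      ⟨0, mem_univ 0, hderiv₀ ▸ one_ne_zero⟩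
  exact ⟨differentiableOn_univ.1 (hGh.differentiableOn hGd isOpen_univ),
    fun z => hne z (mem_univ z), hderiv₀⟩

theorem rightComp_image_closed_general (hf : Differentiable ℂ f) (hne : ∃ z w, f z ≠ f w)
    (hG : ∀ n, elh (G n))
    (hconv : ∀ K : Set ℂ, IsCompact K → TendstoUniformlyOn (fun n => G n ∘ f) g p K) :
    ∃ h : ℂ → ℂ, elh h ∧ g = h ∘ f := by
  obtain ⟨h, hGh⟩ := exists_tendstoLocallyUniformly_of_comp hf hne (fun n => (hG n).1)
    fun K hK => (hconv K hK).uniformCauchySeqOn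
  refine ⟨h, elh_of_tendstoLocallyUniformly hG hGh, funext fun z => ?_⟩
  have hg : Tendsto (fun n => G n (f z)) p (𝓝 (g z)) :=
    (hconv {z} isCompact_singleton).tendsto_at (mem_singleton z)
  have hh : Tendsto (fun n => G n (f z)) p (𝓝 (h (f z))) :=
    (tendstoLocallyUniformlyOn_univ.2 hGh).tendsto_at (mem_univ (f z))
  exact tendsto_nhds_unique hg hh

end Composition

/-- Proposition 3.16, part 2: the image of the right composition mapping `R_f` is closed
in `elh(ℂ)` with the topology of uniform convergence on compact subsets: if `gₙ ∈ elh(ℂ)`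
and `gₙ ∘ f` converges uniformly on every compact subset of `ℂ` to `g`, then `g = h ∘ f`
for some `h ∈ elh(ℂ)`. -/
theorem rightComp_image_closed (f : ℂ → ℂ) (hf : elh f)
    (G : ℕ → ℂ → ℂ) (g : ℂ → ℂ) (hG : ∀ n, elh (G n))
    (hconv : ∀ K : Set ℂ, IsCompact K →
      TendstoUniformlyOn (fun n => (G n) ∘ f) g atTop K) :
    ∃ h : ℂ → ℂ, elh h ∧ g = h ∘ f := by
  obtain ⟨z, hz⟩ := ((hf.1 0).hasDerivAt.eventually_ne (hf.2.1 0)).exists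
  exact rightComp_image_closed_general hf.1 ⟨z, 0, hz⟩ hG hconv
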